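/- Fix D ∈ ℍ^{m×n}, Ω ⊆ Fin m × Fin n, and λ > 0, and set λ₀ = min(λ, 1). Let A : ℕ → ℍ^{m×r}, B : ℕ → ℍ^{r×n}, X : ℕ → ℍ^{m×n} satisfy, for every k: X^k_{ij} = D_{ij} for (i,j) ∈ Ω and X^k_{ij} = (A^k·B^k)_{ij} otherwise; A^{k+1} = (X^k·(B^k)ᴴ + λ·A^k)·(B^k·(B^k)ᴴ + λ·I)⁻¹; and B^{k+1} = ((A^{k+1})ᴴ·A^{k+1} + λ·I)⁻¹·((A^{k+1})ᴴ·X^k + λ·B^k). Then ∑_{k=0}^∞ (‖A^k − A^{k+1}‖_F² + ‖B^k − B^{k+1}‖_F² + ‖X^k − X^{k+1}‖_F²) ≤ (2/λ₀)·½‖A⁰·B⁰ − X⁰‖_F² < ∞; consequently A^k − A^{k+1} → 0, B^k − B^{k+1} → 0, and X^k − X^{k+1} → 0 as k → ∞. -/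

import Mathlib

open scoped Quaternion Matrix
open Filter

/-- The Frobenius norm of a quaternion matrix. -/
noncomputable def frob {m n : ℕ} (A : Matrix (Fin m) (Fin n) ℍ[ℝ]) : ℝ :=
  Real.sqrt (∑ i, ∑ j, ‖A i j‖ ^ 2)

/-!
Each factor update is a proximal step: it minimises the squared residual `‖A * B - X‖ ^ 2` plus
`lam` times the squared distance to the current factor. In an inner product space the optimality
condition of such a step makes the squared residual drop by at least `2 * lam` times the squared
step length. The update of `X` projects the product `A * B` onto the matrices with prescribed
entries on `Ω`, so by Pythagoras the squared residual drops by exactly `‖X k - X (k + 1)‖ ^ 2`.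
Telescoping these decreases bounds the sum of all squared steps by the initial squared residual
up to the factor `1 / min lam 1`.

The adjoint of multiplication by a matrix on either side is multiplication by its conjugate
transpose on that side as soon as the scalars have this property, that is, form an H*-algebra.
-/

section RealSequences

theorem sum_range_le_div_of_mul_le_sub_succ {s F : ℕ → ℝ} {c : ℝ} (hc : 0 < c)
    (hF : ∀ k, 0 ≤ F k) (hstep : ∀ k, c * s k ≤ F k - F (k + 1)) (N : ℕ) :
    ∑ k ∈ Finset.range N, s k ≤ F 0 / c := by
  rw [le_div_iff₀' hc]
  calc c * ∑ k ∈ Finset.range N, s k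
      = ∑ k ∈ Finset.range N, c * s k := Finset.mul_sum ..
    _ ≤ ∑ k ∈ Finset.range N, (F k - F (k + 1)) := Finset.sum_le_sum fun k _ => hstep k
    _ = F 0 - F N := Finset.sum_range_sub' F N
    _ ≤ F 0 := sub_le_self _ (hF N)

theorem tendsto_zero_of_sq_le {ι : Type*} {l : Filter ι} {f s : ι → ℝ}
    (hs : Tendsto s l (nhds 0)) (hfs : ∀ k, f k ^ 2 ≤ s k) : Tendsto f l (nhds 0) := by
  have hsq : Tendsto (fun k => f k ^ 2) l (nhds 0) := squeeze_zero (fun k => sq_nonneg _) hfs hs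
  refine (tendsto_zero_iff_abs_tendsto_zero f).mpr ?_
  simpa only [Real.sqrt_sq_eq_abs, Real.sqrt_zero] using! hsq.sqrt

end RealSequences

section ProximalStep

variable {E F : Type*} [SeminormedAddCommGroup E] [InnerProductSpace ℝ E]
  [SeminormedAddCommGroup F] [InnerProductSpace ℝ F]

-- The hypothesis `hx'` is the first-order condition for `x'` to minimise
-- `z ↦ ‖T z - b‖ ^ 2 + c * ‖z - x‖ ^ 2`.
theorem norm_map_sub_sq_add_le_of_adjoint_eq_smul (T : E →+ F) (S : F → E)
    (hTS : ∀ x y, inner ℝ (T x) y = inner ℝ x (S y)) {c : ℝ} {x x' : E} {b : F}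
    (hx' : S (T x' - b) = c • (x - x')) :
    ‖T x' - b‖ ^ 2 + 2 * c * ‖x - x'‖ ^ 2 ≤ ‖T x - b‖ ^ 2 := by
  have hsplit : T x - b = T (x - x') + (T x' - b) := by rw [map_sub]; abel
  have hcross : inner ℝ (T (x - x')) (T x' - b) = c * ‖x - x'‖ ^ 2 := by
    rw [hTS, hx', real_inner_smul_right, real_inner_self_eq_norm_sq]
  rw [hsplit, norm_add_sq_real, hcross]
  linarith [sq_nonneg ‖T (x - x')‖]

end ProximalStep

/-- A real H*-algebra in the sense of Ambrose, such as `ℝ`, `ℂ` or `ℍ`: the adjoint of a one-sided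
multiplication is multiplication by the star on the same side. Completeness is not part of the
definition, and the algebra structure over `ℝ` is encoded by the two compatibility classes, because
`InnerProductSpace ℝ R` already provides the scalar multiplication. -/
class HStarAlgebra (R : Type*) [NormedRing R] [StarRing R] [InnerProductSpace ℝ R] : Prop
    extends IsScalarTower ℝ R R, SMulCommClass ℝ R R where
  inner_mul_eq_inner_star_mul (a b c : R) : inner ℝ (a * b) c = inner ℝ b (star a * c)
  inner_mul_eq_inner_mul_star (a b c : R) : inner ℝ (a * b) c = inner ℝ a (c * star b)

instance HStarAlgebra.quaternion : HStarAlgebra ℍ[ℝ] where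
  inner_mul_eq_inner_star_mul a b c := by
    have hcyclic : (a * (b * star c)).re = (b * star c * a).re := by
      simp only [Quaternion.re_mul a, Quaternion.re_mul (b * star c)]
      ring
    simpa only [Quaternion.inner_def, star_mul, star_star, mul_assoc] using hcyclic
  inner_mul_eq_inner_mul_star a b c := by
    simp only [Quaternion.inner_def, star_mul, star_star, mul_assoc]

section Frobenius

open scoped Matrix.Norms.Frobenius

variable {m n r : Type*} [Fintype m] [Fintype n] [Fintype r]

section Norm

variable {α : Type*} [SeminormedAddCommGroup α]

theorem frobenius_norm_sq (A : Matrix m n α) : ‖A‖ ^ 2 = ∑ i, ∑ j, ‖A i j‖ ^ 2 := by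
  rw [Matrix.frobenius_norm_def, ← Real.sqrt_eq_rpow, Real.sq_sqrt (by positivity)]
  simp only [Real.rpow_two]

theorem frobenius_norm_sub_sq_eq_add {X X' Y : Matrix m n α}
    (h : ∀ i j, X' i j = X i j ∨ X' i j = Y i j) :
    ‖Y - X‖ ^ 2 = ‖Y - X'‖ ^ 2 + ‖X - X'‖ ^ 2 := by
  simp only [frobenius_norm_sq, ← Finset.sum_add_distrib, Matrix.sub_apply]
  refine Finset.sum_congr rfl fun i _ => Finset.sum_congr rfl fun j _ => ?_
  rcases h i j with hX | hY
  · simp [hX]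
  · simp [hY, norm_sub_rev]

theorem frob_eq_frobenius_norm {m n : ℕ} (A : Matrix (Fin m) (Fin n) ℍ[ℝ]) : frob A = ‖A‖ := by
  rw [frob, ← frobenius_norm_sq, Real.sqrt_sq (norm_nonneg A)]

end Norm

/-- The inner product `∑ i, ∑ j, ⟪P i j, Q i j⟫` inducing the Frobenius norm, which turns
rectangular matrices into an inner product space. It is only a local instance because the Frobenius
norm is a scoped one. -/
noncomputable abbrev frobeniusInnerProductSpace (𝕜 : Type*) {α : Type*} [RCLike 𝕜]
    [SeminormedAddCommGroup α] [InnerProductSpace 𝕜 α] :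
    InnerProductSpace 𝕜 (Matrix m n α) where
  inner P Q := ∑ i, ∑ j, inner 𝕜 (P i j) (Q i j)
  norm_sq_eq_re_inner P := by
    simp only [frobenius_norm_sq, map_sum, norm_sq_eq_re_inner (𝕜 := 𝕜)]
  conj_inner_symm P Q := by simp only [map_sum, inner_conj_symm]
  add_left P Q S := by simp only [Matrix.add_apply, inner_add_left, Finset.sum_add_distrib]
  smul_left P Q c := by simp only [Matrix.smul_apply, inner_smul_left, Finset.mul_sum]

attribute [local instance] frobeniusInnerProductSpace

variable {R : Type*} [NormedRing R] [StarRing R] [InnerProductSpace ℝ R] [HStarAlgebra R]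

theorem frobenius_inner_mul_eq_inner_conjTranspose_mul (P : Matrix m r R) (Q : Matrix r n R)
    (S : Matrix m n R) : inner ℝ (P * Q) S = inner ℝ Q (Pᴴ * S) := by
  change ∑ i, ∑ j, inner ℝ ((P * Q) i j) (S i j) = ∑ k, ∑ j, inner ℝ (Q k j) ((Pᴴ * S) k j)
  simp only [Matrix.mul_apply, Matrix.conjTranspose_apply, sum_inner, inner_sum,
    HStarAlgebra.inner_mul_eq_inner_star_mul]
  calc ∑ i, ∑ j, ∑ k, inner ℝ (Q k j) (star (P i k) * S i j)
      = ∑ i, ∑ k, ∑ j, inner ℝ (Q k j) (star (P i k) * S i j) :=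
        Finset.sum_congr rfl fun _ _ => Finset.sum_comm
    _ = ∑ k, ∑ i, ∑ j, inner ℝ (Q k j) (star (P i k) * S i j) := Finset.sum_comm
    _ = ∑ k, ∑ j, ∑ i, inner ℝ (Q k j) (star (P i k) * S i j) :=
        Finset.sum_congr rfl fun _ _ => Finset.sum_comm

theorem frobenius_inner_mul_eq_inner_mul_conjTranspose (P : Matrix m r R) (Q : Matrix r n R)
    (S : Matrix m n R) : inner ℝ (P * Q) S = inner ℝ P (S * Qᴴ) := by
  change ∑ i, ∑ j, inner ℝ ((P * Q) i j) (S i j) = ∑ i, ∑ k, inner ℝ (P i k) ((S * Qᴴ) i k)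
  simp only [Matrix.mul_apply, Matrix.conjTranspose_apply, sum_inner, inner_sum,
    HStarAlgebra.inner_mul_eq_inner_mul_star]
  exact Finset.sum_congr rfl fun _ _ => Finset.sum_comm

variable [FiniteDimensional ℝ R] [DecidableEq r]

theorem isUnit_conjTranspose_mul_self_add_smul_one (C : Matrix m r R) {lam : ℝ} (hlam : 0 < lam) :
    IsUnit (Cᴴ * C + lam • (1 : Matrix r r R)) := by
  have : IsArtinianRing (Matrix r r R) := isArtinian_of_tower ℝ inferInstance
  rw [IsArtinianRing.isUnit_iff_isRightRegular, isRightRegular_iff_left_eq_zero_of_mul]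
  intro N hN
  have hinner : inner ℝ (N * (Cᴴ * C + lam • (1 : Matrix r r R))) N
      = ‖N * Cᴴ‖ ^ 2 + lam * ‖N‖ ^ 2 := by
    rw [Matrix.mul_add, Matrix.mul_smul, Matrix.mul_one, ← Matrix.mul_assoc, inner_add_left,
      frobenius_inner_mul_eq_inner_mul_conjTranspose, real_inner_smul_left,
      real_inner_self_eq_norm_sq, real_inner_self_eq_norm_sq]
  rw [hN, inner_zero_left] at hinner
  have hnorm : ‖N‖ ^ 2 = 0 := by nlinarith [sq_nonneg ‖N * Cᴴ‖, sq_nonneg ‖N‖]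
  exact norm_eq_zero.mp (pow_eq_zero_iff two_ne_zero |>.mp hnorm)

theorem norm_mul_sub_sq_add_le_of_left_update {lam : ℝ} (hlam : 0 < lam) {A A' : Matrix m r R}
    {B : Matrix r n R} {X : Matrix m n R}
    (hA : A' = (X * Bᴴ + lam • A) * Ring.inverse (B * Bᴴ + lam • (1 : Matrix r r R))) :
    ‖A' * B - X‖ ^ 2 + 2 * lam * ‖A - A'‖ ^ 2 ≤ ‖A * B - X‖ ^ 2 := by
  have hunit := isUnit_conjTranspose_mul_self_add_smul_one Bᴴ hlam
  rw [Matrix.conjTranspose_conjTranspose] at hunit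
  have hnormal : A' * B * Bᴴ + lam • A' = X * Bᴴ + lam • A := by
    calc A' * B * Bᴴ + lam • A' = A' * (B * Bᴴ + lam • (1 : Matrix r r R)) := by
          rw [Matrix.mul_add, Matrix.mul_smul, Matrix.mul_one, Matrix.mul_assoc]
      _ = X * Bᴴ + lam • A := by
          rw [hA, Matrix.mul_assoc, Ring.inverse_mul_cancel _ hunit, Matrix.mul_one]
  refine norm_map_sub_sq_add_le_of_adjoint_eq_smul
    (Matrix.addMonoidHomMulRight B : Matrix m r R →+ Matrix m n R) (· * Bᴴ)
    (fun P S => frobenius_inner_mul_eq_inner_mul_conjTranspose P B S) ?_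
  change (A' * B - X) * Bᴴ = lam • (A - A')
  rw [Matrix.sub_mul, smul_sub, sub_eq_sub_iff_add_eq_add, hnormal, add_comm]

theorem norm_mul_sub_sq_add_le_of_right_update {lam : ℝ} (hlam : 0 < lam) {A : Matrix m r R}
    {B B' : Matrix r n R} {X : Matrix m n R}
    (hB : B' = Ring.inverse (Aᴴ * A + lam • (1 : Matrix r r R)) * (Aᴴ * X + lam • B)) :
    ‖A * B' - X‖ ^ 2 + 2 * lam * ‖B - B'‖ ^ 2 ≤ ‖A * B - X‖ ^ 2 := by
  have hunit := isUnit_conjTranspose_mul_self_add_smul_one A hlam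
  have hnormal : Aᴴ * (A * B') + lam • B' = Aᴴ * X + lam • B := by
    calc Aᴴ * (A * B') + lam • B' = (Aᴴ * A + lam • (1 : Matrix r r R)) * B' := by
          rw [Matrix.add_mul, Matrix.smul_mul, Matrix.one_mul, Matrix.mul_assoc]
      _ = Aᴴ * X + lam • B := by
          rw [hB, ← Matrix.mul_assoc, Ring.mul_inverse_cancel _ hunit, Matrix.one_mul]
  refine norm_map_sub_sq_add_le_of_adjoint_eq_smul
    (Matrix.addMonoidHomMulLeft A : Matrix r n R →+ Matrix m n R) (Aᴴ * ·)
    (fun Q S => frobenius_inner_mul_eq_inner_conjTranspose_mul A Q S) ?_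
  change Aᴴ * (A * B' - X) = lam • (B - B')
  rw [Matrix.mul_sub, smul_sub, sub_eq_sub_iff_add_eq_add, hnormal, add_comm]

theorem min_mul_sum_sq_le_sub_of_update {lam : ℝ} (hlam : 0 < lam)
    {A A' : Matrix m r R} {B B' : Matrix r n R} {X X' : Matrix m n R}
    (hX : ∀ i j, X' i j = X i j ∨ X' i j = (A' * B') i j)
    (hA : A' = (X * Bᴴ + lam • A) * Ring.inverse (B * Bᴴ + lam • (1 : Matrix r r R)))
    (hB : B' = Ring.inverse (A'ᴴ * A' + lam • (1 : Matrix r r R)) * (A'ᴴ * X + lam • B)) :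
    min lam 1 * (‖A - A'‖ ^ 2 + ‖B - B'‖ ^ 2 + ‖X - X'‖ ^ 2)
      ≤ ‖A * B - X‖ ^ 2 - ‖A' * B' - X'‖ ^ 2 := by
  have hleft := norm_mul_sub_sq_add_le_of_left_update hlam hA
  have hright := norm_mul_sub_sq_add_le_of_right_update hlam hB
  have hproj := frobenius_norm_sub_sq_eq_add hX
  calc min lam 1 * (‖A - A'‖ ^ 2 + ‖B - B'‖ ^ 2 + ‖X - X'‖ ^ 2)
      = min lam 1 * ‖A - A'‖ ^ 2 + min lam 1 * ‖B - B'‖ ^ 2 + min lam 1 * ‖X - X'‖ ^ 2 := by ring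
    _ ≤ 2 * lam * ‖A - A'‖ ^ 2 + 2 * lam * ‖B - B'‖ ^ 2 + 1 * ‖X - X'‖ ^ 2 := by
        have hmin : min lam 1 ≤ 2 * lam := (min_le_left _ _).trans (by linarith)
        gcongr
        exact min_le_right _ _
    _ ≤ ‖A * B - X‖ ^ 2 - ‖A' * B' - X'‖ ^ 2 := by linarith

theorem successive_differences_summable_general (D : Matrix m n R) (Ω : Set (m × n))
    (lam : ℝ) (hlam : 0 < lam)
    (A : ℕ → Matrix m r R) (B : ℕ → Matrix r n R) (X : ℕ → Matrix m n R)
    (hXin : ∀ k, ∀ p ∈ Ω, X k p.1 p.2 = D p.1 p.2)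
    (hXout : ∀ k, ∀ p : m × n, p ∉ Ω → X (k + 1) p.1 p.2 = (A (k + 1) * B (k + 1)) p.1 p.2)
    (hA : ∀ k, A (k + 1) = (X k * (B k)ᴴ + lam • A k) *
      Ring.inverse (B k * (B k)ᴴ + lam • (1 : Matrix r r R)))
    (hB : ∀ k, B (k + 1) =
      Ring.inverse ((A (k + 1))ᴴ * A (k + 1) + lam • (1 : Matrix r r R)) *
      ((A (k + 1))ᴴ * X k + lam • B k)) :
    Summable (fun k => ‖A k - A (k + 1)‖ ^ 2 + ‖B k - B (k + 1)‖ ^ 2 + ‖X k - X (k + 1)‖ ^ 2) ∧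
    (∑' k, (‖A k - A (k + 1)‖ ^ 2 + ‖B k - B (k + 1)‖ ^ 2 + ‖X k - X (k + 1)‖ ^ 2)) ≤
      (2 / min lam 1) * ((1 / 2) * ‖A 0 * B 0 - X 0‖ ^ 2) ∧
    Tendsto (fun k => ‖A k - A (k + 1)‖) atTop (nhds 0) ∧
    Tendsto (fun k => ‖B k - B (k + 1)‖) atTop (nhds 0) ∧
    Tendsto (fun k => ‖X k - X (k + 1)‖) atTop (nhds 0) := by
  set s : ℕ → ℝ := fun k =>
    ‖A k - A (k + 1)‖ ^ 2 + ‖B k - B (k + 1)‖ ^ 2 + ‖X k - X (k + 1)‖ ^ 2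
  have hX (k : ℕ) (i : m) (j : n) :
      X (k + 1) i j = X k i j ∨ X (k + 1) i j = (A (k + 1) * B (k + 1)) i j :=
    (em ((i, j) ∈ Ω)).imp (fun hp => (hXin (k + 1) _ hp).trans (hXin k _ hp).symm) (hXout k _)
  have hpartial := sum_range_le_div_of_mul_le_sub_succ (s := s) (lt_min hlam one_pos)
    (fun k => sq_nonneg ‖A k * B k - X k‖)
    fun k => min_mul_sum_sq_le_sub_of_update hlam (hX k) (hA k) (hB k)
  have hs : Summable s := summable_of_sum_range_le (fun k => by positivity) hpartial
  refine ⟨hs, (hs.tsum_le_of_sum_range_le hpartial).trans_eq (by ring), ?_, ?_, ?_⟩ <;>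
    refine tendsto_zero_of_sq_le hs.tendsto_atTop_zero fun k => ?_ <;>
    simp only [s] <;> linarith [sq_nonneg ‖A k - A (k + 1)‖, sq_nonneg ‖B k - B (k + 1)‖,
      sq_nonneg ‖X k - X (k + 1)‖]

end Frobenius

/-- Square-summability of successive differences along the LRQD iteration, and
convergence of the successive differences to zero. -/
theorem successive_differences_summable {m r n : ℕ}
    (D : Matrix (Fin m) (Fin n) ℍ[ℝ]) (Ω : Set (Fin m × Fin n))
    (lam : ℝ) (hlam : 0 < lam)
    (A : ℕ → Matrix (Fin m) (Fin r) ℍ[ℝ]) (B : ℕ → Matrix (Fin r) (Fin n) ℍ[ℝ])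
    (X : ℕ → Matrix (Fin m) (Fin n) ℍ[ℝ])
    (hXin : ∀ k, ∀ p ∈ Ω, X k p.1 p.2 = D p.1 p.2)
    (hXout : ∀ k, ∀ p : Fin m × Fin n, p ∉ Ω → X k p.1 p.2 = (A k * B k) p.1 p.2)
    (hA : ∀ k, A (k + 1) = (X k * (B k)ᴴ + lam • A k) *
      Ring.inverse (B k * (B k)ᴴ + lam • (1 : Matrix (Fin r) (Fin r) ℍ[ℝ])))
    (hB : ∀ k, B (k + 1) =
      Ring.inverse ((A (k + 1))ᴴ * A (k + 1) + lam • (1 : Matrix (Fin r) (Fin r) ℍ[ℝ])) *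
      ((A (k + 1))ᴴ * X k + lam • B k)) :
    Summable (fun k => frob (A k - A (k + 1)) ^ 2 + frob (B k - B (k + 1)) ^ 2 +
        frob (X k - X (k + 1)) ^ 2) ∧
    (∑' k, (frob (A k - A (k + 1)) ^ 2 + frob (B k - B (k + 1)) ^ 2 +
        frob (X k - X (k + 1)) ^ 2)) ≤
      (2 / min lam 1) * ((1 / 2) * frob (A 0 * B 0 - X 0) ^ 2) ∧
    Tendsto (fun k => frob (A k - A (k + 1))) atTop (nhds 0) ∧
    Tendsto (fun k => frob (B k - B (k + 1))) atTop (nhds 0) ∧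
    Tendsto (fun k => frob (X k - X (k + 1))) atTop (nhds 0) := by
  simpa only [frob_eq_frobenius_norm] using
    successive_differences_summable_general D Ω lam hlam A B X hXin (fun k => hXout (k + 1)) hA hB
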